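/- If l is a good Lyndon word and g is a good word with g ≤ l lexicographically, then the concatenation l·g is a good word. -/

import Mathlib

open scoped BigOperators

noncomputable section

/-- The field `ℚ(q)` of rational functions over `ℚ`. -/
abbrev K : Type := RatFunc ℚ

/-- The indeterminate `q`. -/
abbrev qq : K := RatFunc.X

/-- Words on the alphabet `{w_1, …, w_r}` (the free monoid `M`). -/
abbrev Word (r : ℕ) := List (Fin r)

/-- The space `F` with basis the words, as finitely supported families of coefficients. -/
abbrev FA (r : ℕ) := Word r →₀ K

variable {r : ℕ}

/-- `(|w|, |x|)` : the symmetric bilinear form evaluated on the degrees of two words,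
where `p i j = (α_i, α_j)` is the form on simple roots. -/
def pairW (p : Fin r → Fin r → ℤ) (w x : Word r) : ℤ :=
  (w.map fun i => (x.map fun j => p i j).sum).sum

/-- Auxiliary q-shuffle on *reversed* words:
`shAux p w x` is the q-shuffle of `w.reverse` and `x.reverse`; it implements the recursion
`(w·a) * (x·b) = (w * (x·b))·a + q^{-(|w·a|,|b|)} ((w·a) * x)·b`, `w[] * x = x * w[] = x`. -/
def shAux (p : Fin r → Fin r → ℤ) : Word r → Word r → FA r
  | [], x => Finsupp.single x.reverse 1
  | w, [] => Finsupp.single w.reverse 1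
  | a :: w, b :: x =>
      Finsupp.mapDomain (fun u => u ++ [a]) (shAux p w (b :: x))
      + (qq ^ (-(pairW p (a :: w) [b]))) •
          Finsupp.mapDomain (fun u => u ++ [b]) (shAux p (a :: w) x)
  termination_by w x => w.length + x.length
  decreasing_by all_goals (first | (simp only [List.length_cons]; omega) | omega)

/-- The q-shuffle product `*` on `F`, extended bilinearly from words. -/
def shuffle (p : Fin r → Fin r → ℤ) (f g : FA r) : FA r :=
  f.sum fun w c => g.sum fun x d => (c * d) • shAux p w.reverse x.reverse

/-- Membership in `𝒰`, the `ℚ(q)`-subalgebra of `(F, *)` generated by the letters `w_i`. -/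
inductive InU (p : Fin r → Fin r → ℤ) : FA r → Prop
  | letter (i : Fin r) : InU p (Finsupp.single [i] 1)
  | one : InU p (Finsupp.single ([] : Word r) 1)
  | add : ∀ {f g : FA r}, InU p f → InU p g → InU p (f + g)
  | smul : ∀ (c : K) {f : FA r}, InU p f → InU p (c • f)
  | mul : ∀ {f g : FA r}, InU p f → InU p g → InU p (shuffle p f g)

/-- The degree of a word in `Q⁺`, recorded as the multiplicity of each simple root. -/
def deg (w : Word r) : Fin r → ℕ := fun i => w.count i

/-- `f` is homogeneous of degree `ν`. -/
def Homog (f : FA r) (ν : Fin r → ℕ) : Prop := ∀ w ∈ f.support, deg w = ν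

/-- Lexicographic order on words (a proper left factor is smaller than the word). -/
def wlt (w x : Word r) : Prop := List.Lex (· < ·) w x

def wle (w x : Word r) : Prop := wlt w x ∨ w = x

/-- `g` is the lexicographically largest word occurring (with nonzero coefficient) in `f`. -/
def IsMaxWord (f : FA r) (g : Word r) : Prop :=
  f g ≠ 0 ∧ ∀ w ∈ f.support, wle w g

/-- Good words: words of the form `max(u)` for a nonzero homogeneous `u ∈ 𝒰`. -/
def IsGood (p : Fin r → Fin r → ℤ) (g : Word r) : Prop :=
  ∃ u : FA r, InU p u ∧ (∃ ν, Homog u ν) ∧ IsMaxWord u g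

/-- Lyndon words: nonempty words smaller than all their proper nonempty right factors. -/
def IsLyndon (l : Word r) : Prop :=
  l ≠ [] ∧ ∀ u v : Word r, l = u ++ v → u ≠ [] → v ≠ [] → wlt l v

/-- The data of the Cartan matrix `[a_{ij}]` of a finite-dimensional complex simple
Lie algebra of rank `r`: an integral matrix with `2` on the diagonal and nonpositive
off-diagonal entries, symmetrizable by `d_i ∈ {1,2,3}`, whose symmetrization
`(α_i, α_j) = d_i a_{ij}` is positive definite, and which is indecomposable. -/
structure CartanData (r : ℕ) where
  a : Fin r → Fin r → ℤ
  d : Fin r → ℤ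
  diag : ∀ i, a i i = 2
  offdiag : ∀ i j, i ≠ j → a i j ≤ 0
  dval : ∀ i, d i = 1 ∨ d i = 2 ∨ d i = 3
  dsymm : ∀ i j, d i * a i j = d j * a j i
  posdef : ∀ v : Fin r → ℚ, v ≠ 0 → 0 < ∑ i, ∑ j, v i * v j * ((d i * a i j : ℤ) : ℚ)
  indec : ∀ s : Finset (Fin r), s.Nonempty → s ≠ Finset.univ →
    ∃ i ∈ s, ∃ j, j ∉ s ∧ a i j ≠ 0

/-- The symmetric bilinear form `(α_i, α_j) = d_i a_{ij}` on simple roots. -/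
def CartanData.p (C : CartanData r) : Fin r → Fin r → ℤ := fun i j => C.d i * C.a i j

/-! ### Auxiliary material for the proof -/

theorem wle_iff (u v : Word r) : wle u v ↔ u ≤ v := by
  have h : wlt u v ↔ u < v := Iff.rfl
  unfold wle
  rw [h, le_iff_lt_or_eq]

theorem wcons_le {a b : Fin r} {u v : Word r} (h : a :: u ≤ b :: v) :
    a < b ∨ (a = b ∧ u ≤ v) := by
  rcases lt_or_eq_of_le h with h | h
  · rcases List.cons_lt_cons_iff.1 h with h | ⟨h, h'⟩
    · exact Or.inl h
    · exact Or.inr ⟨h, le_of_lt h'⟩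
  · injection h with h1 h2
    exact Or.inr ⟨h1, le_of_eq h2⟩

theorem wcons_lt {a b : Fin r} (u v : Word r) (h : a < b) : a :: u < b :: v :=
  List.cons_lt_cons_iff.2 (Or.inl h)

theorem wcons_mono (a : Fin r) {u v : Word r} (h : u ≤ v) : a :: u ≤ a :: v := by
  rcases lt_or_eq_of_le h with h | h
  · exact le_of_lt (List.cons_lt_cons_iff.2 (Or.inr ⟨rfl, h⟩))
  · rw [h]

/-- `Sh u v z`: the word `z` is an interleaving of `u` and `v`. -/
inductive Sh : Word r → Word r → Word r → Prop
  | nil : Sh [] [] []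
  | left (a : Fin r) {u v z : Word r} : Sh u v z → Sh (a :: u) v (a :: z)
  | right (a : Fin r) {u v z : Word r} : Sh u v z → Sh u (a :: v) (a :: z)

theorem Sh.nil_left : ∀ v : Word r, Sh [] v v
  | [] => Sh.nil
  | b :: v => Sh.right b (Sh.nil_left v)

theorem Sh.append : ∀ u v : Word r, Sh u v (u ++ v)
  | [], v => Sh.nil_left v
  | a :: u, v => Sh.left a (Sh.append u v)

theorem Sh.nil_right (u : Word r) : Sh u [] u := by
  simpa using Sh.append u []

theorem Sh.eq_of_nil_left {u v z : Word r} (h : Sh u v z) (hu : u = []) : z = v := by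
  induction h with
  | nil => rfl
  | left a h ih => cases hu
  | right a h ih => rw [ih hu]

theorem Sh.snoc_left (a : Fin r) {u v z : Word r} (h : Sh u v z) :
    Sh (u ++ [a]) v (z ++ [a]) := by
  induction h with
  | nil => exact Sh.left a Sh.nil
  | left b h ih => exact Sh.left b ih
  | right b h ih => exact Sh.right b ih

theorem Sh.snoc_right (a : Fin r) {u v z : Word r} (h : Sh u v z) :
    Sh u (v ++ [a]) (z ++ [a]) := by
  induction h with
  | nil => exact Sh.right a Sh.nil
  | left b h ih => exact Sh.left b ih
  | right b h ih => exact Sh.right b ih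

theorem Sh.count {u v z : Word r} (h : Sh u v z) (i : Fin r) :
    z.count i = u.count i + v.count i := by
  induction h with
  | nil => simp
  | left b h ih => simp only [List.count_cons, ih]; omega
  | right b h ih => simp only [List.count_cons, ih]; omega

/-- Interleavings are monotone in both arguments, when lengths are fixed. -/
theorem Sh.mono {u v z : Word r} (h : Sh u v z) : ∀ {u' v' : Word r},
    u.length = u'.length → v.length = v'.length → u ≤ u' → v ≤ v' →
    ∃ z', Sh u' v' z' ∧ z ≤ z' ∧ (z = z' → u = u' ∧ v = v') := by
  induction h with
  | nil =>
    intro u' v' hu hv _ _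
    have h1 : u' = [] := List.length_eq_zero_iff.1 hu.symm
    have h2 : v' = [] := List.length_eq_zero_iff.1 hv.symm
    subst h1; subst h2
    exact ⟨[], Sh.nil, le_rfl, fun _ => ⟨rfl, rfl⟩⟩
  | @left a u v z h ih =>
    intro u' v' hu hv hu' hv'
    cases u' with
    | nil => simp at hu
    | cons a' u' =>
      rcases wcons_le hu' with hlt | ⟨rfl, hle⟩
      · refine ⟨a' :: (u' ++ v'), Sh.left _ (Sh.append _ _), le_of_lt (wcons_lt _ _ hlt), ?_⟩
        intro he
        injection he with h1 _
        exact absurd h1 (ne_of_lt hlt)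
      · obtain ⟨z', h1, h2, h3⟩ := ih (by simpa using hu) hv hle hv'
        refine ⟨a :: z', Sh.left _ h1, wcons_mono _ h2, ?_⟩
        intro he
        injection he with _ he
        exact ⟨by rw [(h3 he).1], (h3 he).2⟩
  | @right a u v z h ih =>
    intro u' v' hu hv hu' hv'
    cases v' with
    | nil => simp at hv
    | cons a' v' =>
      rcases wcons_le hv' with hlt | ⟨rfl, hle⟩
      · refine ⟨a' :: (u' ++ v'), Sh.right _ (Sh.append _ _), le_of_lt (wcons_lt _ _ hlt), ?_⟩
        intro he
        injection he with h1 _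
        exact absurd h1 (ne_of_lt hlt)
      · obtain ⟨z', h1, h2, h3⟩ := ih hu (by simpa using hv) hu' hle
        refine ⟨a :: z', Sh.right _ h1, wcons_mono _ h2, ?_⟩
        intro he
        injection he with _ he
        exact ⟨(h3 he).1, by rw [(h3 he).2]⟩

/-- Moving a word `c` from in front of the larger word to in front of the smaller one
does not decrease the largest interleaving. -/
theorem Sh.transfer : ∀ (z c u v : Word r), v ≤ u → Sh (c ++ u) v z →
    ∃ z', Sh u (c ++ v) z' ∧ z ≤ z' := by
  intro z
  induction z with
  | nil =>
    intro c u v _ h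
    generalize hw : c ++ u = w at h
    cases h
    obtain ⟨rfl, rfl⟩ := List.append_eq_nil_iff.1 hw
    exact ⟨[], Sh.nil, le_rfl⟩
  | cons e z ih =>
    intro c u v hvu h
    cases c with
    | nil => exact ⟨_, h, le_rfl⟩
    | cons a c =>
      cases h with
      | left _ h =>
        obtain ⟨z', h1, h2⟩ := ih c u v hvu h
        exact ⟨_, Sh.right _ h1, wcons_mono _ h2⟩
      | @right _ _ v' _ h =>
        cases u with
        | nil =>
          exact absurd hvu (not_le_of_gt (List.nil_lt_cons _ _))
        | cons d u' =>
          rcases wcons_le hvu with hlt | ⟨rfl, hle⟩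
          · exact ⟨_, Sh.left d (Sh.append _ _), le_of_lt (wcons_lt _ _ hlt)⟩
          · obtain ⟨z', h1, h2⟩ := ih (a :: c ++ [e]) u' v' hle (by simpa using h)
            exact ⟨_, Sh.left e (by simpa using h1), wcons_mono _ h2⟩

/-- If all nonempty suffixes of `u` are at least `g`, the largest interleaving is `u ++ g`. -/
theorem Sh.le_append (g : Word r) : ∀ (u z : Word r),
    (∀ s t : Word r, u = s ++ t → t ≠ [] → g ≤ t) → Sh u g z → z ≤ u ++ g := by
  intro u
  induction u with
  | nil => intro z _ h; exact le_of_eq (h.eq_of_nil_left rfl)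
  | cons a u ih =>
    intro z hs h
    have hs' : ∀ s t : Word r, u = s ++ t → t ≠ [] → g ≤ t :=
      fun s t he ht => hs (a :: s) t (by rw [he]; rfl) ht
    have hg : g ≤ a :: u := hs [] _ rfl (by simp)
    cases h with
    | left _ h => exact wcons_mono _ (ih _ hs' h)
    | @right b _ g' z h =>
      rcases wcons_le hg with hlt | ⟨rfl, hle⟩
      · exact le_of_lt (wcons_lt _ _ hlt)
      · obtain ⟨z', h1, h2⟩ := Sh.transfer z [b] u g' hle h
        exact wcons_mono _ (h2.trans (ih _ hs' h1))

/-- `Val c t`: `c` is a Laurent polynomial in `q` whose value at `q = 1` is `t`. -/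
def Val (c : K) (t : ℚ) : Prop :=
  ∃ (n : ℕ) (f : Polynomial ℚ), c * qq ^ n = algebraMap (Polynomial ℚ) K f ∧ f.eval 1 = t

theorem qq_ne : qq ≠ 0 := RatFunc.X_ne_zero

theorem Val.zero : Val 0 0 := ⟨0, 0, by simp, by simp⟩

theorem Val.one : Val 1 1 := ⟨0, 1, by simp, by simp⟩

theorem Val.add {c d : K} {s t : ℚ} (h : Val c s) (h' : Val d t) : Val (c + d) (s + t) := by
  obtain ⟨n, f, hf, rfl⟩ := h
  obtain ⟨m, g, hg, rfl⟩ := h'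
  refine ⟨n + m, f * Polynomial.X ^ m + g * Polynomial.X ^ n, ?_, by simp⟩
  rw [map_add, map_mul, map_mul, ← hf, ← hg, map_pow, map_pow, RatFunc.algebraMap_X]
  ring

theorem Val.zpow {c : K} {t : ℚ} (h : Val c t) (k : ℤ) : Val (qq ^ k * c) t := by
  obtain ⟨n, f, hf, rfl⟩ := h
  obtain ⟨m, rfl | rfl⟩ := Int.eq_nat_or_neg k
  · refine ⟨n, Polynomial.X ^ m * f, ?_, by simp⟩
    rw [map_mul, ← hf, map_pow, RatFunc.algebraMap_X, zpow_natCast]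
    ring
  · refine ⟨n + m, f, ?_, rfl⟩
    have := pow_ne_zero m qq_ne
    rw [← hf, zpow_neg, zpow_natCast]
    field_simp
    ring

theorem Val.ne_zero {c : K} {t : ℚ} (h : Val c t) (ht : 0 < t) : c ≠ 0 := by
  rintro rfl
  obtain ⟨n, f, hf, rfl⟩ := h
  rw [zero_mul] at hf
  have : f = 0 := (map_eq_zero_iff _ (RatFunc.algebraMap_injective ℚ)).1 hf.symm
  simp [this] at ht

theorem snoc_inj (a : Fin r) : Function.Injective (fun u : Word r => u ++ [a]) :=
  fun _ _ h => List.append_cancel_right h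

theorem mapDomain_val (f : FA r) (a : Fin r) (hf : ∀ z, ∃ t, 0 ≤ t ∧ Val (f z) t) (z : Word r) :
    ∃ t, 0 ≤ t ∧ Val (Finsupp.mapDomain (fun u => u ++ [a]) f z) t := by
  by_cases hz : z ∈ Set.range (fun u : Word r => u ++ [a])
  · obtain ⟨y, rfl⟩ := hz
    rw [Finsupp.mapDomain_apply (snoc_inj a)]
    exact hf y
  · rw [Finsupp.mapDomain_of_notMem_range _ _ hz]
    exact ⟨0, le_rfl, Val.zero⟩

theorem single_val (w z : Word r) :
    ∃ t, 0 ≤ t ∧ Val ((Finsupp.single w 1 : FA r) z) t := by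
  by_cases h : w = z
  · subst h
    rw [Finsupp.single_eq_same]
    exact ⟨1, zero_le_one, Val.one⟩
  · rw [Finsupp.single_eq_of_ne (Ne.symm h)]
    exact ⟨0, le_rfl, Val.zero⟩

theorem shAux_nonneg (p : Fin r → Fin r → ℤ) (w x : Word r) :
    ∀ z, ∃ t, 0 ≤ t ∧ Val (shAux p w x z) t := by
  induction w, x using shAux.induct with
  | case1 x => intro z; rw [shAux]; exact single_val _ _
  | case2 w h => intro z; rw [shAux]; exact single_val _ _; exact h
  | case3 a w b x ih1 ih2 =>
    intro z
    rw [shAux, Finsupp.add_apply, Finsupp.smul_apply, smul_eq_mul]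
    obtain ⟨s, hs, h1⟩ := mapDomain_val _ a ih1 z
    obtain ⟨t, ht, h2⟩ := mapDomain_val _ b ih2 z
    exact ⟨s + t, add_nonneg hs ht, h1.add (h2.zpow _)⟩

theorem shAux_pos (p : Fin r → Fin r → ℤ) (w x : Word r) :
    ∃ t, 0 < t ∧ Val (shAux p w x (w.reverse ++ x.reverse)) t := by
  induction w, x using shAux.induct with
  | case1 x => rw [shAux]; exact ⟨1, one_pos, by simpa using Val.one⟩
  | case2 w h => rw [shAux]; exact ⟨1, one_pos, by simpa using Val.one⟩; exact h
  | case3 a w b x ih1 ih2 =>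
    rw [shAux, Finsupp.add_apply, Finsupp.smul_apply, smul_eq_mul]
    obtain ⟨s, hs, h1⟩ := mapDomain_val _ a (shAux_nonneg p w (b :: x))
      ((a :: w).reverse ++ (b :: x).reverse)
    obtain ⟨t, ht, h2⟩ := ih2
    refine ⟨s + t, add_pos_of_nonneg_of_pos hs ht, h1.add (Val.zpow ?_ _)⟩
    have he : (a :: w).reverse ++ (b :: x).reverse
        = (fun u : Word r => u ++ [b]) ((a :: w).reverse ++ x.reverse) := by simp
    rw [he, Finsupp.mapDomain_apply (snoc_inj b)]
    exact h2

theorem mapDomain_ne (f : FA r) (a : Fin r) (z : Word r)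
    (h : Finsupp.mapDomain (fun u => u ++ [a]) f z ≠ 0) : ∃ y, z = y ++ [a] ∧ f y ≠ 0 := by
  by_cases hz : z ∈ Set.range (fun u : Word r => u ++ [a])
  · obtain ⟨y, rfl⟩ := hz
    rw [Finsupp.mapDomain_apply (snoc_inj a)] at h
    exact ⟨y, rfl, h⟩
  · exact absurd (Finsupp.mapDomain_of_notMem_range _ _ hz) h

theorem single_ne (w z : Word r) (h : (Finsupp.single w 1 : FA r) z ≠ 0) : z = w := by
  by_contra hne
  exact h (Finsupp.single_eq_of_ne hne)

theorem shAux_sh (p : Fin r → Fin r → ℤ) (w x : Word r) :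
    ∀ z, shAux p w x z ≠ 0 → Sh w.reverse x.reverse z := by
  induction w, x using shAux.induct with
  | case1 x =>
    intro z hz
    rw [shAux] at hz
    rw [single_ne _ _ hz]
    exact Sh.nil_left _
  | case2 w h =>
    intro z hz
    rw [shAux] at hz
    · rw [single_ne _ _ hz]
      exact Sh.nil_right _
    · exact h
  | case3 a w b x ih1 ih2 =>
    intro z hz
    rw [shAux, Finsupp.add_apply, Finsupp.smul_apply, smul_eq_mul] at hz
    by_cases h1 : Finsupp.mapDomain (fun u => u ++ [a]) (shAux p w (b :: x)) z = 0
    · rw [h1, zero_add] at hz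
      obtain ⟨y, rfl, hy⟩ := mapDomain_ne _ _ _ (right_ne_zero_of_mul hz)
      have := (ih2 y hy).snoc_right b
      rwa [← List.reverse_cons] at this
    · obtain ⟨y, rfl, hy⟩ := mapDomain_ne _ _ _ h1
      have := (ih1 y hy).snoc_left a
      rwa [← List.reverse_cons] at this

theorem shuffle_apply (p : Fin r → Fin r → ℤ) (f g : FA r) (z : Word r) :
    shuffle p f g z = ∑ w ∈ f.support, ∑ x ∈ g.support,
      (f w * g x) * shAux p w.reverse x.reverse z := by
  simp only [shuffle, Finsupp.sum, Finsupp.finsetSum_apply, Finsupp.smul_apply, smul_eq_mul]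

theorem shuffle_sh (p : Fin r → Fin r → ℤ) (f g : FA r) (z : Word r)
    (h : shuffle p f g z ≠ 0) : ∃ w ∈ f.support, ∃ x ∈ g.support, Sh w x z := by
  rw [shuffle_apply] at h
  obtain ⟨w, hw, h⟩ := Finset.exists_ne_zero_of_sum_ne_zero h
  obtain ⟨x, hx, h⟩ := Finset.exists_ne_zero_of_sum_ne_zero h
  refine ⟨w, hw, x, hx, ?_⟩
  simpa using shAux_sh p _ _ z (right_ne_zero_of_mul h)

theorem length_eq_of_deg {w x : Word r} (h : deg w = deg x) : w.length = x.length :=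
  (List.perm_iff_count.2 fun i => congrFun h i).length_eq

/-- Proposition 3.5: if `l` is a good Lyndon word and `g` a good word with `g ≤ l`,
then `l·g` is a good word. -/
theorem good_lyndon_concat_good {r : ℕ} (hr : 1 ≤ r) (C : CartanData r)
    (l g : Word r) (hlG : IsGood C.p l) (hlL : IsLyndon l)
    (hg : IsGood C.p g) (hle : wle g l) :
    IsGood C.p (l ++ g) := by
  obtain ⟨u, hu, ⟨μ, hμ⟩, hul, humax⟩ := hlG
  obtain ⟨v, hv, ⟨ν, hν⟩, hvg, hvmax⟩ := hg
  have hlu : l ∈ u.support := Finsupp.mem_support_iff.2 hul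
  have hgv : g ∈ v.support := Finsupp.mem_support_iff.2 hvg
  rw [wle_iff] at hle
  have hsuf : ∀ s t : Word r, l = s ++ t → t ≠ [] → g ≤ t := by
    intro s t he ht
    by_cases hs : s = []
    · subst hs
      rw [List.nil_append] at he
      exact he ▸ hle
    · exact hle.trans ((wle_iff _ _).1 (Or.inl (hlL.2 s t he hs ht)))
  have key : ∀ w ∈ u.support, ∀ x ∈ v.support, ∀ z, Sh w x z →
      z ≤ l ++ g ∧ (z = l ++ g → w = l ∧ x = g) := by
    intro w hw x hx z hz
    obtain ⟨z', h1, h2, h3⟩ := hz.mono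
      (length_eq_of_deg ((hμ w hw).trans (hμ l hlu).symm))
      (length_eq_of_deg ((hν x hx).trans (hν g hgv).symm))
      ((wle_iff _ _).1 (humax w hw)) ((wle_iff _ _).1 (hvmax x hx))
    have h4 := Sh.le_append g l z' hsuf h1
    refine ⟨h2.trans h4, fun he => h3 (le_antisymm h2 ?_)⟩
    rw [he]
    exact h4
  refine ⟨shuffle C.p u v, InU.mul hu hv, ⟨μ + ν, ?_⟩, ?_, ?_⟩
  · intro z hz
    obtain ⟨w, hw, x, hx, h⟩ := shuffle_sh _ _ _ _ (Finsupp.mem_support_iff.1 hz)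
    funext i
    rw [Pi.add_apply, ← hμ w hw, ← hν x hx]
    exact h.count i
  · have hz : ∀ w ∈ u.support, ∀ x ∈ v.support, ¬ (w = l ∧ x = g) →
        shAux C.p w.reverse x.reverse (l ++ g) = 0 := by
      intro w hw x hx hne
      by_contra h
      have h' := shAux_sh _ _ _ _ h
      rw [List.reverse_reverse, List.reverse_reverse] at h'
      exact hne ((key w hw x hx _ h').2 rfl)
    rw [shuffle_apply, Finset.sum_eq_single_of_mem l hlu, Finset.sum_eq_single_of_mem g hgv]
    · obtain ⟨t, ht, h⟩ := shAux_pos C.p l.reverse g.reverse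
      rw [List.reverse_reverse, List.reverse_reverse] at h
      exact mul_ne_zero (mul_ne_zero hul hvg) (h.ne_zero ht)
    · intro x hx hne
      rw [hz l hlu x hx (fun h => hne h.2), mul_zero]
    · intro w hw hne
      refine Finset.sum_eq_zero fun x hx => ?_
      rw [hz w hw x hx (fun h => hne h.1), mul_zero]
  · intro z hz
    obtain ⟨w, hw, x, hx, h⟩ := shuffle_sh _ _ _ _ (Finsupp.mem_support_iff.1 hz)
    exact (wle_iff _ _).2 (key w hw x hx z h).1
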